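/- Let c₁, c₂, c₃ ∈ 𝔽_p^* and set ρ = Σ_{c ∈ 𝔽_p^*} Σ_{x ∈ 𝔽_p^*} χ̄₁(x(c−c₁)) Σ_{y ∈ 𝔽_p^*} χ̄₁(−y c₂) η̄(y) Σ_{z ∈ 𝔽_p^*} χ̄₁(−z²c/(4y) − z c₃). Then ρ = −(η̄(−c₁) + η̄(−c₂))·Ḡ + η̄(−c₁)(p−1)²·Ḡ if c₃² − c₁c₂ = 0, and ρ = −(p+1)·η̄(−c₂)·Ḡ − p·η̄(−c₁)·Ḡ if c₃² − c₁c₂ ≠ 0. -/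

import Mathlib

open Finset
open scoped Classical

noncomputable section

/-- `ζ_p = exp(2πi/p)`. -/
def zeta (p : ℕ) : ℂ := Complex.exp (2 * Real.pi * Complex.I / p)

/-- The canonical additive character of `ℤ/p`: `χ̄₁(c) = ζ_p^c`. -/
def chiBar (p : ℕ) (c : ZMod p) : ℂ := zeta p ^ c.val

/-- The quadratic character of `(ℤ/p)^*`, extended by `η̄(0) = 0`. -/
def etaBar (p : ℕ) (c : ZMod p) : ℂ :=
  if c = 0 then 0 else if IsSquare c then 1 else -1

/-- The quadratic character of `F^*`, extended by `η(0) = 0`. -/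
def etaQ (F : Type) [Field F] (x : F) : ℂ :=
  if x = 0 then 0 else if IsSquare x then 1 else -1

/-- The absolute trace map from `F` to `ℤ/p`. -/
def Trq (p : ℕ) (F : Type) [Field F] [Algebra (ZMod p) F] (x : F) : ZMod p :=
  Algebra.trace (ZMod p) F x

/-- The canonical additive character of `F`: `χ₁(x) = ζ_p^{Tr x}`. -/
def chiQ (p : ℕ) (F : Type) [Field F] [Algebra (ZMod p) F] (x : F) : ℂ :=
  chiBar p (Trq p F x)

/-- The quadratic Gauss sum `G` over `F`. -/
def GaussQ (p : ℕ) (F : Type) [Field F] [Fintype F] [Algebra (ZMod p) F] : ℂ :=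
  ∑ x ∈ univ.filter (fun x : F => x ≠ 0), etaQ F x * chiQ p F x

/-- The quadratic Gauss sum `Ḡ` over `ℤ/p`. -/
def GaussP (p : ℕ) [NeZero p] : ℂ :=
  ∑ y ∈ univ.filter (fun y : ZMod p => y ≠ 0), etaBar p y * chiBar p y

section helpers
variable (p : ℕ) [Fact (Nat.Prime p)]

lemma chiBar_std (c : ZMod p) : chiBar p c = ZMod.stdAddChar c := by
  rw [ZMod.stdAddChar_apply, ZMod.toCircle_apply, chiBar, zeta, ← Complex.exp_nat_mul]
  congr 1
  ring

lemma chiBar_add (a b : ZMod p) : chiBar p (a + b) = chiBar p a * chiBar p b := by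
  simp only [chiBar_std, AddChar.map_add_eq_mul]

lemma chiBar_zero : chiBar p 0 = 1 := by simp [chiBar]

lemma etaBar_eq (c : ZMod p) : etaBar p c = ((quadraticChar (ZMod p) c : ℤ) : ℂ) := by
  rw [quadraticChar_apply, quadraticCharFun, etaBar]
  split_ifs <;> simp

lemma etaBar_zero : etaBar p 0 = 0 := by simp [etaBar]

lemma etaBar_mul (a b : ZMod p) : etaBar p (a * b) = etaBar p a * etaBar p b := by
  simp only [etaBar_eq, map_mul, Int.cast_mul]

lemma etaBar_sq {a : ZMod p} (ha : a ≠ 0) : etaBar p a * etaBar p a = 1 := by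
  rw [etaBar, if_neg ha]
  split_ifs <;> simp

lemma etaBar_self_sq {a : ZMod p} (ha : a ≠ 0) : etaBar p (a ^ 2) = 1 := by
  rw [pow_two, etaBar_mul, etaBar_sq p ha]

lemma sum_ne (f : ZMod p → ℂ) :
    ∑ x ∈ univ.filter (fun x : ZMod p => x ≠ 0), f x = (∑ x, f x) - f 0 := by
  rw [Finset.filter_ne', Finset.sum_erase_eq_sub (Finset.mem_univ _)]

lemma sum_chi (t : ZMod p) :
    ∑ x, chiBar p (x * t) = if t = 0 then (p : ℂ) else 0 := by
  simp only [chiBar_std]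
  rw [AddChar.sum_mulShift t (ZMod.isPrimitive_stdAddChar p)]
  split_ifs <;> simp [ZMod.card]

lemma sum_chi_ne (t : ZMod p) :
    ∑ x ∈ univ.filter (fun x : ZMod p => x ≠ 0), chiBar p (x * t)
      = (if t = 0 then (p : ℂ) else 0) - 1 := by
  rw [sum_ne, sum_chi, zero_mul, chiBar_zero]

lemma GaussP_eq : GaussP p = ∑ y, etaBar p y * chiBar p y := by
  rw [GaussP, sum_ne, etaBar_zero]; simp

lemma gauss_shift {t : ZMod p} (ht : t ≠ 0) :
    ∑ y, etaBar p y * chiBar p (t * y) = etaBar p t * GaussP p := by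
  rw [GaussP_eq, ← Equiv.sum_comp (Equiv.mulLeft₀ t ht) (fun y => etaBar p y * chiBar p y),
    Finset.mul_sum]
  refine Finset.sum_congr rfl fun y _ => ?_
  simp only [Equiv.mulLeft₀_apply, etaBar_mul]
  linear_combination (-(etaBar p y * chiBar p (t * y))) * etaBar_sq p ht

lemma ringChar_ne (hp : Odd p) : ringChar (ZMod p) ≠ 2 := by
  rw [ZMod.ringChar_zmod_n]
  rintro rfl
  exact absurd hp (by decide)

lemma two_ne (hp : Odd p) : (2 : ZMod p) ≠ 0 := Ring.two_ne_zero (ringChar_ne p hp)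

lemma sum_eta (hp : Odd p) : ∑ c, etaBar p c = 0 := by
  simp only [etaBar_eq]
  exact_mod_cast quadraticChar_sum_zero (ringChar_ne p hp)

lemma sum_sq (hp : Odd p) (f : ZMod p → ℂ) :
    ∑ z, f (z ^ 2) = ∑ w, (etaBar p w + 1) * f w := by
  rw [← Finset.sum_fiberwise Finset.univ (fun z : ZMod p => z ^ 2)]
  refine Finset.sum_congr rfl fun w _ => ?_
  have h := quadraticChar_card_sqrts (ringChar_ne p hp) w
  have h2 : ({x : ZMod p | x ^ 2 = w} : Set (ZMod p)).toFinset
      = Finset.univ.filter (fun z : ZMod p => z ^ 2 = w) := by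
    ext; simp
  rw [h2] at h
  rw [Finset.sum_congr rfl (g := fun _ => f w)
    (by intro z hz; rw [(Finset.mem_filter.mp hz).2])]
  rw [Finset.sum_const, nsmul_eq_mul, etaBar_eq]
  congr 1
  exact_mod_cast h

lemma quad_sum (hp : Odd p) {A : ZMod p} (hA : A ≠ 0) :
    ∑ z, chiBar p (A * z ^ 2) = etaBar p A * GaussP p := by
  rw [sum_sq p hp (fun w => chiBar p (A * w))]
  simp only [add_mul, one_mul, Finset.sum_add_distrib]
  rw [gauss_shift p hA]
  have := sum_chi p A
  rw [if_neg hA] at this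
  simp only [mul_comm A, this, add_zero]

lemma z_sum (hp : Odd p) {c y : ZMod p} (hc : c ≠ 0) (hy : y ≠ 0) (d : ZMod p) :
    ∑ z ∈ univ.filter (fun z : ZMod p => z ≠ 0), chiBar p (-(z ^ 2 * c) / (4 * y) - z * d)
      = etaBar p (-c) * etaBar p y * GaussP p * chiBar p (y * (d ^ 2 / c)) - 1 := by
  have h2 := two_ne p hp
  have h4 : (4 : ZMod p) ≠ 0 := by
    have : (4 : ZMod p) = 2 * 2 := by norm_num
    rw [this]; exact mul_ne_zero h2 h2
  rw [sum_ne]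
  have h0 : chiBar p (-((0 : ZMod p) ^ 2 * c) / (4 * y) - 0 * d) = 1 := by
    simp [chiBar_zero]
  rw [h0]
  congr 1
  have hA : -c / (4 * y) ≠ 0 := div_ne_zero (neg_ne_zero.mpr hc) (mul_ne_zero h4 hy)
  have hη : etaBar p (-c / (4 * y)) = etaBar p (-c) * etaBar p y := by
    have : -c / (4 * y) = -c * y * ((2 * y)⁻¹) ^ 2 := by field_simp; norm_num
    rw [this, etaBar_mul, etaBar_mul, etaBar_self_sq p (inv_ne_zero (mul_ne_zero h2 hy)), mul_one]
  rw [← hη, ← quad_sum p hp hA, Finset.sum_mul,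
    ← Equiv.sum_comp (Equiv.addRight (2 * y * d / c))
      (fun z => chiBar p (-c / (4 * y) * z ^ 2) * chiBar p (y * (d ^ 2 / c)))]
  refine Finset.sum_congr rfl fun z _ => ?_
  rw [← chiBar_add]
  congr 1
  simp only [Equiv.coe_addRight]
  field_simp
  ring

lemma y_sum (hp : Odd p) {b c : ZMod p} (hb : b ≠ 0) (hc : c ≠ 0) (d : ZMod p) :
    ∑ y ∈ univ.filter (fun y : ZMod p => y ≠ 0), chiBar p (-(y * b)) * etaBar p y *
        ∑ z ∈ univ.filter (fun z : ZMod p => z ≠ 0), chiBar p (-(z ^ 2 * c) / (4 * y) - z * d)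
      = etaBar p (-c) * GaussP p * ((if c = d ^ 2 / b then (p : ℂ) else 0) - 1)
        - etaBar p (-b) * GaussP p := by
  have key : ∀ y ∈ univ.filter (fun y : ZMod p => y ≠ 0), chiBar p (-(y * b)) * etaBar p y *
        ∑ z ∈ univ.filter (fun z : ZMod p => z ≠ 0), chiBar p (-(z ^ 2 * c) / (4 * y) - z * d)
      = etaBar p (-c) * GaussP p * chiBar p (y * (d ^ 2 / c - b))
        - etaBar p y * chiBar p (-b * y) := by
    intro y hy
    have hy : y ≠ 0 := (Finset.mem_filter.mp hy).2
    have e1 : y * (d ^ 2 / c - b) = -(y * b) + y * (d ^ 2 / c) := by ring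
    have e2 : -b * y = -(y * b) := by ring
    rw [z_sum p hp hc hy, e1, e2, chiBar_add]
    linear_combination (chiBar p (-(y * b)) * etaBar p (-c) * GaussP p *
      chiBar p (y * (d ^ 2 / c))) * etaBar_sq p hy
  rw [Finset.sum_congr rfl key, Finset.sum_sub_distrib, ← Finset.mul_sum, sum_chi_ne]
  congr 1
  · congr 2
    refine if_congr ?_ rfl rfl
    rw [sub_eq_zero, div_eq_iff hc, eq_div_iff hb, mul_comm b c]
    exact eq_comm
  · rw [sum_ne, gauss_shift p (neg_ne_zero.mpr hb), etaBar_zero]; simp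

lemma rho_aux (hp : Odd p) {a b d : ZMod p} (ha : a ≠ 0) (hb : b ≠ 0) (hd : d ≠ 0) :
    ∑ c ∈ univ.filter (fun c : ZMod p => c ≠ 0), ∑ x ∈ univ.filter (fun x : ZMod p => x ≠ 0), chiBar p (x * (c - a)) *
      ∑ y ∈ univ.filter (fun y : ZMod p => y ≠ 0), chiBar p (-(y * b)) * etaBar p y *
        ∑ z ∈ univ.filter (fun z : ZMod p => z ≠ 0), chiBar p (-(z ^ 2 * c) / (4 * y) - z * d)
      = (p : ℂ) * (etaBar p (-a) * GaussP p * ((if a = d ^ 2 / b then (p : ℂ) else 0) - 1)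
        - etaBar p (-b) * GaussP p) - etaBar p (-b) * GaussP p := by
  have key : ∀ c ∈ univ.filter (fun c : ZMod p => c ≠ 0),
      ∑ x ∈ univ.filter (fun x : ZMod p => x ≠ 0), chiBar p (x * (c - a)) *
      ∑ y ∈ univ.filter (fun y : ZMod p => y ≠ 0), chiBar p (-(y * b)) * etaBar p y *
        ∑ z ∈ univ.filter (fun z : ZMod p => z ≠ 0), chiBar p (-(z ^ 2 * c) / (4 * y) - z * d)
      = (if c = a then (p : ℂ) * (etaBar p (-c) * GaussP p *
          ((if c = d ^ 2 / b then (p : ℂ) else 0) - 1) - etaBar p (-b) * GaussP p) else 0)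
        - (if c = d ^ 2 / b then etaBar p (-c) * GaussP p * (p : ℂ) else 0)
        + GaussP p * etaBar p (-1) * etaBar p c + etaBar p (-b) * GaussP p := by
    intro c hc
    have hc : c ≠ 0 := (Finset.mem_filter.mp hc).2
    have e : etaBar p (-c) = etaBar p (-1) * etaBar p c := by rw [← etaBar_mul, neg_one_mul]
    rw [y_sum p hp hb hc, ← Finset.sum_mul, sum_chi_ne]
    simp only [sub_eq_zero, e]
    split_ifs <;> ring
  have hq : d ^ 2 / b ≠ 0 := div_ne_zero (pow_ne_zero _ hd) hb
  have hη : etaBar p (-(d ^ 2 / b)) = etaBar p (-b) := by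
    have : -(d ^ 2 / b) = -b * (d / b) ^ 2 := by field_simp
    rw [this, etaBar_mul, etaBar_self_sq p (div_ne_zero hd hb), mul_one]
  rw [Finset.sum_congr rfl key, sum_ne]
  simp only [Finset.sum_add_distrib, Finset.sum_sub_distrib, ← Finset.mul_sum, sum_eta p hp,
    Finset.sum_ite_eq', Finset.sum_ite_eq, Finset.mem_univ, if_true, Finset.sum_const,
    Finset.card_univ, ZMod.card, nsmul_eq_mul, etaBar_zero, hη, if_neg ha.symm, if_neg hq.symm]
  ring

end helpers

theorem rho_eval (p : ℕ) [Fact (Nat.Prime p)] (hp : Odd p)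
    (c₁ c₂ c₃ : ZMod p) (hc₁ : c₁ ≠ 0) (hc₂ : c₂ ≠ 0) (hc₃ : c₃ ≠ 0) :
    (c₃ ^ 2 - c₁ * c₂ = 0 →
      (∑ c ∈ univ.filter (fun c : ZMod p => c ≠ 0), ∑ x ∈ univ.filter (fun x : ZMod p => x ≠ 0), chiBar p (x * (c - c₁)) *
      ∑ y ∈ univ.filter (fun y : ZMod p => y ≠ 0), chiBar p (-(y * c₂)) * etaBar p y *
        ∑ z ∈ univ.filter (fun z : ZMod p => z ≠ 0), chiBar p (-(z ^ 2 * c) / (4 * y) - z * c₃)) = -((etaBar p (-c₁) + etaBar p (-c₂)) * GaussP p) + etaBar p (-c₁) * ((p : ℂ) - 1) ^ 2 * GaussP p) ∧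
    (c₃ ^ 2 - c₁ * c₂ ≠ 0 →
      (∑ c ∈ univ.filter (fun c : ZMod p => c ≠ 0), ∑ x ∈ univ.filter (fun x : ZMod p => x ≠ 0), chiBar p (x * (c - c₁)) *
      ∑ y ∈ univ.filter (fun y : ZMod p => y ≠ 0), chiBar p (-(y * c₂)) * etaBar p y *
        ∑ z ∈ univ.filter (fun z : ZMod p => z ≠ 0), chiBar p (-(z ^ 2 * c) / (4 * y) - z * c₃)) = -(((p : ℂ) + 1) * etaBar p (-c₂) * GaussP p) - (p : ℂ) * etaBar p (-c₁) * GaussP p) := by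
  rw [rho_aux p hp hc₁ hc₂ hc₃]
  have hiff : c₁ = c₃ ^ 2 / c₂ ↔ c₃ ^ 2 - c₁ * c₂ = 0 := by
    rw [eq_div_iff hc₂, sub_eq_zero]; exact eq_comm
  constructor
  · intro h
    have hη : etaBar p (-c₁) = etaBar p (-c₂) := by
      have h1 : -c₁ = -c₂ * (c₃ / c₂) ^ 2 := by
        rw [hiff.mpr h]; field_simp
      rw [h1, etaBar_mul, etaBar_self_sq p (div_ne_zero hc₃ hc₂), mul_one]
    rw [if_pos (hiff.mpr h), hη]
    ring
  · intro h
    rw [if_neg (fun h' => h (hiff.mp h'))]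
    ring
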